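/- (Consistency is preserved by the GPDR rule CONFLICT.) Suppose the configuration ⟨⟨σ', q', i+1⟩·M ∣ R₀,…,R_N; N⟩ is consistent with i + 1 ≤ N, and a frame R : Q → Val → Prop satisfies: (a) for every σ, R q' σ implies σ ≠ σ'; and (b) for all q and σ, F(R_i) q σ implies R q σ. Then the configuration ⟨∅ ∣ R₀', …, R_N'; N⟩ is consistent, where R_j' = fun q σ => R_j q σ ∧ R q σ for 1 ≤ j ≤ i + 1 and R_j' = R_j for j = 0 and i + 1 < j ≤ N. -/

import Mathlib

/-- The jump transition `⟨q, σ₁⟩ →δ ⟨q', σ₂⟩` of a DTSTS. -/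
def Jump {Q V : Type*}
    (δ : Set (Q × ((V → ℝ) → Prop) × ((V → ℝ) → (V → ℝ) → Prop) × Q))
    (q : Q) (σ₁ : V → ℝ) (q' : Q) (σ₂ : V → ℝ) : Prop :=
  ∃ φ φc, (q, φ, φc, q') ∈ δ ∧ φ σ₁ ∧ φc σ₁ σ₂

/-- The forward predicate transformer of the DTSTS `(Q, q₀, φ₀, δ)`. -/
def FTrans {Q V : Type*} (q₀ : Q) (φ₀ : (V → ℝ) → Prop)
    (δ : Set (Q × ((V → ℝ) → Prop) × ((V → ℝ) → (V → ℝ) → Prop) × Q))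
    (R : Q → (V → ℝ) → Prop) : Q → (V → ℝ) → Prop :=
  fun q' σ₂ => (q' = q₀ ∧ φ₀ σ₂) ∨
    ∃ q φ φc σ₁, (q, φ, φc, q') ∈ δ ∧ R q σ₁ ∧ φ σ₁ ∧ φc σ₁ σ₂

/-- Consistency of a GPDR configuration `⟨M ∣ R₀,…,R_N; N⟩` (Definition 8).
Frames are given as `R : ℕ → Q → (V → ℝ) → Prop` (only indices `≤ N` matter),
and the trace `M` is a list of triples `(σ, q, i)`. -/
structure Consistent {Q V : Type*} (q₀ : Q) (φ₀ : (V → ℝ) → Prop)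
    (δ : Set (Q × ((V → ℝ) → Prop) × ((V → ℝ) → (V → ℝ) → Prop) × Q))
    (φP : (V → ℝ) → Prop)
    (R : ℕ → Q → (V → ℝ) → Prop) (N : ℕ)
    (M : List ((V → ℝ) × Q × ℕ)) : Prop where
  /-- (Con-A): `R₀` at `q₀` is the initial condition… -/
  conA₁ : ∀ σ, R 0 q₀ σ ↔ φ₀ σ
  /-- (Con-A): …and is `False` at other locations. -/
  conA₂ : ∀ q, q ≠ q₀ → ∀ σ, ¬ R 0 q σ
  /-- (Con-B): the frames are increasing. -/
  conB : ∀ i, i < N → ∀ q σ, R i q σ → R (i + 1) q σ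
  /-- (Con-C): frames below `N` are safe. -/
  conC : ∀ i, i < N → ∀ q σ, R i q σ → φP σ
  /-- (Con-D): frames are closed under the forward predicate transformer. -/
  conD : ∀ i, i < N → ∀ q σ, FTrans q₀ φ₀ δ (R i) q σ → R (i + 1) q σ
  /-- (Con-E): level-`N` trace entries are in `R_N` and violate safety. -/
  conE : ∀ σ q, (σ, q, N) ∈ M → R N q σ ∧ ¬ φP σ
  /-- (Con-F): consecutive trace entries are connected by a transition. -/
  conF : ∀ k i (σ₁ : V → ℝ) (q₁ : Q) (σ₂ : V → ℝ) (q₂ : Q), i < N →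
    M[k]? = some (σ₁, q₁, i) → M[k + 1]? = some (σ₂, q₂, i + 1) →
    ∃ φ φc, (q₁, φ, φc, q₂) ∈ δ ∧ R i q₁ σ₁ ∧ φ σ₁ ∧ φc σ₁ σ₂

/-!
Ordered pointwise, frames form a lattice on which the forward transformer `F` is monotone. For
`j ≤ i` the frames increase, so `F(R_j') ≤ F(R_j) ≤ F(R_i) ≤ R`, which is what (Con-D) asks of the
strengthened frames. The one frame left alone below level `i + 1` is `R₀`, and (Con-B) holds there
because the initial states lie in `F` of every frame, hence in `R`.
-/

section StrengthenUpTo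

variable {α : Type*} [SemilatticeInf α] {R : ℕ → α} {G A : α} {k j : ℕ}

/-- The sequence `R` with its terms of index `1, …, k` met with `G`, the effect of the rule CONFLICT
on the frames. The term of index `0` is kept, since it has to remain the initial condition. -/
def strengthenUpTo (R : ℕ → α) (G : α) (k j : ℕ) : α :=
  if 1 ≤ j ∧ j ≤ k then R j ⊓ G else R j

theorem strengthenUpTo_zero : strengthenUpTo R G k 0 = R 0 :=
  if_neg (by simp)

theorem strengthenUpTo_le : strengthenUpTo R G k j ≤ R j := by
  unfold strengthenUpTo
  split_ifs
  · exact inf_le_left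
  · exact le_rfl

theorem strengthenUpTo_le_of_zero_le (hzero : R 0 ≤ G) (hjk : j ≤ k) :
    strengthenUpTo R G k j ≤ G := by
  rcases Nat.eq_zero_or_pos j with rfl | hj
  · exact strengthenUpTo_le.trans hzero
  · exact (if_pos ⟨hj, hjk⟩).trans_le inf_le_right

theorem le_strengthenUpTo (hR : A ≤ R j) (hG : j ≤ k → A ≤ G) : A ≤ strengthenUpTo R G k j := by
  unfold strengthenUpTo
  split_ifs with hj
  · exact le_inf hR (hG hj.2)
  · exact hR

end StrengthenUpTo

section Consistent

variable {Q V : Type*} {q₀ : Q} {φ₀ : (V → ℝ) → Prop}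
  {δ : Set (Q × ((V → ℝ) → Prop) × ((V → ℝ) → (V → ℝ) → Prop) × Q)}
  {φP : (V → ℝ) → Prop} {R : ℕ → Q → (V → ℝ) → Prop} {N i : ℕ}
  {M : List ((V → ℝ) × Q × ℕ)}

theorem monotone_fTrans : Monotone (FTrans q₀ φ₀ δ) := by
  rintro A B hAB q' σ₂ (hinit | ⟨q, φ, φc, σ₁, hδ, hA, hstep⟩)
  · exact Or.inl hinit
  · exact Or.inr ⟨q, φ, φc, σ₁, hδ, hAB q σ₁ hA, hstep⟩

theorem Consistent.monotoneOn (h : Consistent q₀ φ₀ δ φP R N M) : MonotoneOn R (Set.Iic N) :=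
  monotoneOn_of_le_add_one Set.ordConnected_Iic fun j _ _ hj => h.conB j hj

theorem Consistent.zero_le_fTrans (h : Consistent q₀ φ₀ δ φP R N M) (A : Q → (V → ℝ) → Prop) :
    R 0 ≤ FTrans q₀ φ₀ δ A := by
  intro q σ hσ
  have hq : q = q₀ := by_contra fun hne => h.conA₂ q hne σ hσ
  subst hq
  exact Or.inl ⟨rfl, (h.conA₁ σ).1 hσ⟩

theorem consistent_conflict_general {G : Q → (V → ℝ) → Prop}
    (h : Consistent q₀ φ₀ δ φP R N M) (hiN : i ≤ N) (hblock : FTrans q₀ φ₀ δ (R i) ≤ G) :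
    Consistent q₀ φ₀ δ φP (strengthenUpTo R G (i + 1)) N [] where
  conA₁ := by simpa only [strengthenUpTo_zero] using h.conA₁
  conA₂ := by simpa only [strengthenUpTo_zero] using h.conA₂
  conB j hj := by
    have hzero : R 0 ≤ G := (h.zero_le_fTrans (R i)).trans hblock
    exact le_strengthenUpTo (strengthenUpTo_le.trans (h.conB j hj)) fun hji =>
      strengthenUpTo_le_of_zero_le hzero (Nat.le_of_succ_le hji)
  conC j hj q σ hσ := by
    have hle : strengthenUpTo R G (i + 1) j ≤ R j := strengthenUpTo_le
    exact h.conC j hj q σ (hle q σ hσ)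
  conD j hj := by
    have hF : FTrans q₀ φ₀ δ (strengthenUpTo R G (i + 1) j) ≤ FTrans q₀ φ₀ δ (R j) :=
      monotone_fTrans strengthenUpTo_le
    refine le_strengthenUpTo (hF.trans (h.conD j hj)) fun hji => ?_
    have hRji : R j ≤ R i := h.monotoneOn hj.le hiN (Nat.le_of_succ_le_succ hji)
    calc FTrans q₀ φ₀ δ (strengthenUpTo R G (i + 1) j)
        ≤ FTrans q₀ φ₀ δ (R j) := hF
      _ ≤ FTrans q₀ φ₀ δ (R i) := monotone_fTrans hRji
      _ ≤ G := hblock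
  conE := by simp
  conF := by simp

end Consistent

/-- Consistency is preserved by the GPDR rule CONFLICT. -/
theorem consistent_conflict {Q V : Type*} [Fintype V]
    (q₀ : Q) (φ₀ : (V → ℝ) → Prop)
    (δ : Set (Q × ((V → ℝ) → Prop) × ((V → ℝ) → (V → ℝ) → Prop) × Q))
    (φP : (V → ℝ) → Prop)
    (R : ℕ → Q → (V → ℝ) → Prop) (N i : ℕ)
    (σ' : V → ℝ) (q' : Q) (M' : List ((V → ℝ) × Q × ℕ))
    (Rg : Q → (V → ℝ) → Prop)
    (hcons : Consistent q₀ φ₀ δ φP R N ((σ', q', i + 1) :: M'))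
    (hiN : i + 1 ≤ N)
    (hgen : ∀ σ, Rg q' σ → σ ≠ σ')
    (hblock : ∀ q σ, FTrans q₀ φ₀ δ (R i) q σ → Rg q σ) :
    Consistent q₀ φ₀ δ φP
      (fun j => if 1 ≤ j ∧ j ≤ i + 1 then (fun q σ => R j q σ ∧ Rg q σ) else R j)
      N ([] : List ((V → ℝ) × Q × ℕ)) :=
  consistent_conflict_general hcons (Nat.le_of_succ_le hiN) hblock
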